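/- arXiv:0809.2965 — 3 statements merged into one kernel-verified Lean document; each statement's English description precedes it below -/
import Mathlib

section
/- There exists a recursively enumerable set A ⊆ ℕ with characteristic sequence χ such that for every total recursive function t : ℕ → ℕ there is a constant c_t with 0 < c_t < 1 such that for all n ≥ 1, Cᵗ(χ_{1:n}|n) ≥ c_t·n. -/
/-!
The set is built by diagonalization on dyadic blocks. Block `k` consists of the positions
`2^k, …, 2^(k+1) - 1` and is assigned to the code `i` for which `2^i` exactly divides `k`. To fill
the block, evaluate the code `i` at `2^2^k`. If this converges to `T`, run for `T` steps each of
the pairs (input `n`, program `p`) with pairing number below `2^2^k - 1`, and extract from the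
output, read as a string of length `n`, the bits at the positions of the block. There are fewer
such pairs than values of a block, so some value is not hit; the least one becomes the content of
the block (`exists_not_hit`, `block_prefEncode`). If the code diverges, the block stays empty.
Membership amounts to success of a search for a primitive recursively checkable witness, so the set
is recursively enumerable (`isRE_diagSet`).

Given a total recursive `t`, let `i` be a code for a monotone majorant of `t`
(`exists_majorant`). Blocks assigned to `i` recur with gap `2^(i+1)` (`exists_index`), so every long
prefix length `n` is within a constant factor, depending on `i` only, of `2^k` for such a block
lying entirely below `n`. A program of length less than a small constant times `n`
forms with `n` one of the pairs examined for that block (`pair_lt`), hence does not output the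
prefix in time `t n` (`pair_ge`). For small `n` it suffices that the only program of length `0`,
the code of the constant zero function, outputs the empty string.
-/

open Filter Set

/-- The length of the binary string identified with the natural number `x` under the
length-increasing lexicographic pairing (`ε ↔ 0`, `0 ↔ 1`, `1 ↔ 2`, `00 ↔ 3`, `01 ↔ 4`, …). -/
def strLen (x : ℕ) : ℕ := Nat.log2 (x + 1)

/-- The universal machine `U`: run the partial recursive code encoded by the
binary string `p` on input `y`. -/
def univ (p y : ℕ) : Part ℕ :=
  Nat.Partrec.Code.eval (Denumerable.ofNat Nat.Partrec.Code p) y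

/-- The conditional Kolmogorov complexity `C(x|y)`: the minimum length of a
binary string `p` with `U(p,y) = x`. -/
noncomputable def KC (x y : ℕ) : ℕ :=
  sInf {L | ∃ p, strLen p = L ∧ x ∈ univ p y}

/-- The step-bounded universal machine: `p` on input `y` outputs `x`
within `t(|x|)` computation steps. -/
def univBounded (t : ℕ → ℕ) (p y x : ℕ) : Prop :=
  x ∈ Nat.Partrec.Code.evaln (t (strLen x)) (Denumerable.ofNat Nat.Partrec.Code p) y

/-- The time-bounded conditional Kolmogorov complexity `C^t(x|y)`: the minimum
length of a binary string `p` with `U(p,y) = x` within `t(|x|)` steps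
(`⊤` if no program succeeds within the time bound). -/
noncomputable def KCt (t : ℕ → ℕ) (x y : ℕ) : ℕ∞ :=
  sInf {L : ℕ∞ | ∃ p, (strLen p : ℕ∞) = L ∧ univBounded t p y x}

/-- The natural number encoding (under the length-increasing lexicographic pairing)
of the string `ω₁ω₂…ωₙ` of the first `n` bits of the infinite binary sequence `ω`
(where `ω i` is bit `ω_{i+1}`). -/
def prefEncode (ω : ℕ → Bool) : ℕ → ℕ
  | 0 => 0
  | n + 1 => 2 * prefEncode ω n + (if ω n then 1 else 0) + 1

/-- A set `A ⊆ ℕ` is recursively enumerable if it is the domain of a partial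
computable function. -/
def isRE (A : Set ℕ) : Prop := ∃ f : ℕ →. ℕ, Partrec f ∧ ∀ x, x ∈ A ↔ (f x).Dom

open Classical in
/-- The characteristic sequence `χ = χ₁χ₂…` of `A ⊆ ℕ`: `χᵢ = 1` iff `i ∈ A`
(as a function `ℕ → Bool`, `chi A i` is bit `χ_{i+1}`). -/
noncomputable def chi (A : Set ℕ) : ℕ → Bool := fun i => if (i + 1) ∈ A then true else false

open Nat.Partrec (Code)

/-! ### The diagonal set -/

/-- Bits `2^k, …, 2^(k+1) - 1` (one-based) of the string of length `n` encoded by `x`, read as a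
binary number.  The binary expansion of `x + 1` is that string with a leading `1`. -/
def block (k n x : ℕ) : ℕ := (x + 1) / 2 ^ (n + 1 - 2 ^ (k + 1)) % 2 ^ 2 ^ k

/-- Block `k` of the output of program `p` on input `n` within `T` steps, where `q` is the pair
`(n, p)`; `none` if there is no output in time. -/
def outBlock (T k q : ℕ) : Option ℕ :=
  (Code.evaln T (Denumerable.ofNat Code q.unpair.2) q.unpair.1).map (block k q.unpair.1)

/-- `s` is the `k`-th block of a `T`-step output of one of the fewer than `2 ^ 2 ^ k` first pairs
(input, program). -/
def Hit (T k s : ℕ) : Prop := ∃ q < 2 ^ 2 ^ k - 1, outBlock T k q = some s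

/-- The decidable matrix of the diagonal set: `y` lies in block `k`, the block `k` is assigned to
the code `i` (that is, `k` is positive and `2^i` exactly divides it), the code `i` gives the time
bound `T` for this block after `u` steps, `s` is the least value not hit, and the bit of `s` at position `y` is `1`. -/
def Witness (y k i u T s : ℕ) : Prop :=
  2 ^ k ≤ y ∧ y < 2 ^ (k + 1) ∧ k % 2 ^ i = 0 ∧ k % 2 ^ (i + 1) ≠ 0 ∧
    Code.evaln u (Denumerable.ofNat Code i) (2 ^ 2 ^ k) = some T ∧
    ¬ Hit T k s ∧ (∀ s' < s, Hit T k s') ∧ s / 2 ^ (2 ^ (k + 1) - 1 - y) % 2 = 1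

/-- The diagonal set. -/
def diagSet : Set ℕ := {y | ∃ k i u T s, Witness y k i u T s}

/-! ### Recursive enumerability -/

theorem primrec_two_pow : Primrec fun n : ℕ => 2 ^ n :=
  have h : Primrec₂ fun _ r : ℕ => r * 2 := Primrec.nat_mul.comp Primrec.snd (Primrec.const 2)
  (Primrec.nat_rec₁ 1 h).of_eq fun n => by
    induction n with
    | zero => rfl
    | succ n ih => simp only [pow_succ, ← ih]

theorem primrec_block {α : Type*} [Primcodable α] {k n x : α → ℕ} (hk : Primrec k)
    (hn : Primrec n) (hx : Primrec x) : Primrec fun a => block (k a) (n a) (x a) :=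
  Primrec.nat_mod.comp
    (Primrec.nat_div.comp (Primrec.succ.comp hx)
      (primrec_two_pow.comp (Primrec.nat_sub.comp (Primrec.succ.comp hn)
        (primrec_two_pow.comp (Primrec.succ.comp hk)))))
    (primrec_two_pow.comp (primrec_two_pow.comp hk))

theorem primrec_evaln_ofNat {α : Type*} [Primcodable α] {u i y : α → ℕ} (hu : Primrec u)
    (hi : Primrec i) (hy : Primrec y) :
    Primrec fun a => Code.evaln (u a) (Denumerable.ofNat Code (i a)) (y a) :=
  Code.primrec_evaln.comp ((hu.pair ((Primrec.ofNat Code).comp hi)).pair hy)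

theorem primrec_outBlock {α : Type*} [Primcodable α] {T k q : α → ℕ} (hT : Primrec T)
    (hk : Primrec k) (hq : Primrec q) : Primrec fun a => outBlock (T a) (k a) (q a) := by
  have h1 : Primrec fun a => (q a).unpair.1 := Primrec.fst.comp (Primrec.unpair.comp hq)
  have h2 : Primrec fun a => (q a).unpair.2 := Primrec.snd.comp (Primrec.unpair.comp hq)
  have hb : Primrec₂ fun (a : α) (x : ℕ) => block (k a) (q a).unpair.1 x :=
    primrec_block (α := α × ℕ) (hk.comp Primrec.fst) (h1.comp Primrec.fst) Primrec.snd
  exact Primrec.option_map (primrec_evaln_ofNat hT h2 h1) hb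

theorem primrec_hit : PrimrecPred fun a : (ℕ × ℕ) × ℕ => Hit a.1.1 a.1.2 a.2 := by
  have hR : PrimrecRel fun (q : ℕ) (a : (ℕ × ℕ) × ℕ) => outBlock a.1.1 a.1.2 q = some a.2 :=
    Primrec.eq.comp
      (primrec_outBlock (Primrec.fst.comp (Primrec.fst.comp Primrec.snd))
        (Primrec.snd.comp (Primrec.fst.comp Primrec.snd)) Primrec.fst)
      (Primrec.option_some.comp (Primrec.snd.comp Primrec.snd))
  have hbound : Primrec fun a : (ℕ × ℕ) × ℕ => List.range (2 ^ 2 ^ a.1.2 - 1) :=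
    Primrec.list_range.comp (Primrec.nat_sub.comp (primrec_two_pow.comp (primrec_two_pow.comp
      (Primrec.snd.comp Primrec.fst))) (Primrec.const 1))
  exact (hR.exists_mem_list.comp hbound Primrec.id).of_eq fun a => by simp [Hit]

theorem primrec_hit_comp {α : Type*} [Primcodable α] {T k s : α → ℕ} (hT : Primrec T)
    (hk : Primrec k) (hs : Primrec s) : PrimrecPred fun a => Hit (T a) (k a) (s a) :=
  primrec_hit.comp ((hT.pair hk).pair hs)

theorem primrec_hit_below {α : Type*} [Primcodable α] {T k s : α → ℕ} (hT : Primrec T)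
    (hk : Primrec k) (hs : Primrec s) : PrimrecPred fun a => ∀ s' < s a, Hit (T a) (k a) s' := by
  have hR : PrimrecRel fun (s' : ℕ) (a : ℕ × ℕ) => Hit a.1 a.2 s' :=
    primrec_hit_comp (Primrec.fst.comp Primrec.snd) (Primrec.snd.comp Primrec.snd) Primrec.fst
  exact (hR.forall_mem_list.comp (Primrec.list_range.comp hs) (hT.pair hk)).of_eq
    fun a => by simp

theorem primrec_witness : PrimrecPred fun a : ℕ × (ℕ × ℕ × ℕ × ℕ × ℕ) =>
    Witness a.1 a.2.1 a.2.2.1 a.2.2.2.1 a.2.2.2.2.1 a.2.2.2.2.2 := by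
  have y : Primrec fun a : ℕ × (ℕ × ℕ × ℕ × ℕ × ℕ) => a.1 := Primrec.fst
  have r := @Primrec.snd ℕ (ℕ × ℕ × ℕ × ℕ × ℕ) _ _
  have k := Primrec.fst.comp r
  have r := Primrec.snd.comp r
  have i := Primrec.fst.comp r
  have r := Primrec.snd.comp r
  have u := Primrec.fst.comp r
  have r := Primrec.snd.comp r
  have T := Primrec.fst.comp r
  have s := Primrec.snd.comp r
  have hpk := primrec_two_pow.comp (Primrec.succ.comp k)
  refine (Primrec.nat_le.comp (primrec_two_pow.comp k) y).and
    ((Primrec.nat_lt.comp y hpk).and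
    ((Primrec.eq.comp (Primrec.nat_mod.comp k (primrec_two_pow.comp i)) (Primrec.const 0)).and
    ((Primrec.eq.comp (Primrec.nat_mod.comp k (primrec_two_pow.comp (Primrec.succ.comp i)))
      (Primrec.const 0)).not.and
    ((Primrec.eq.comp (primrec_evaln_ofNat u i (primrec_two_pow.comp (primrec_two_pow.comp k)))
      (Primrec.option_some.comp T)).and
    ((primrec_hit_comp T k s).not.and ((primrec_hit_below T k s).and
    (Primrec.eq.comp (Primrec.nat_mod.comp (Primrec.nat_div.comp s (primrec_two_pow.comp
      (Primrec.nat_sub.comp (Primrec.nat_sub.comp hpk (Primrec.const 1)) y))) (Primrec.const 2))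
      (Primrec.const 1))))))))

theorem isRE_diagSet : isRE diagSet := by
  classical
  let W : ℕ × (ℕ × ℕ × ℕ × ℕ × ℕ) → Bool := fun a =>
    decide (Witness a.1 a.2.1 a.2.2.1 a.2.2.2.1 a.2.2.2.2.1 a.2.2.2.2.2)
  have hW : Primrec W := primrec_witness.decide
  let p : ℕ → ℕ → Bool := fun y w => W (y, Denumerable.ofNat (ℕ × ℕ × ℕ × ℕ × ℕ) w)
  have hpair : Primrec fun a : ℕ × ℕ => (a.1, Denumerable.ofNat (ℕ × ℕ × ℕ × ℕ × ℕ) a.2) :=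
    Primrec.fst.pair ((Primrec.ofNat _).comp Primrec.snd)
  have hp : Primrec₂ p := hW.comp hpair
  refine ⟨fun y => Nat.rfind fun w => Part.some (p y w), Partrec.rfind hp.to_comp.partrec₂, ?_⟩
  intro y
  refine Iff.trans ?_ (Nat.rfind_dom' (p := fun w => Part.some (p y w))).symm
  constructor
  · rintro ⟨k, i, u, T, s, h⟩
    exact ⟨Encodable.encode (k, i, u, T, s), by simpa [p, W] using h, by simp⟩
  · rintro ⟨w, hw, -⟩
    exact ⟨_, _, _, _, _, of_decide_eq_true (Part.mem_some_iff.1 hw).symm⟩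

/-! ### The contents of the blocks -/

/-- Fewer than `2 ^ 2 ^ k` values are hit, so one of the first `2 ^ 2 ^ k` values is not. -/
theorem exists_not_hit (T k : ℕ) :
    ∃ s < 2 ^ 2 ^ k, ¬ Hit T k s ∧ ∀ s' < s, Hit T k s' := by
  classical
  have hex : ∃ s < 2 ^ 2 ^ k, ¬ Hit T k s := by
    by_contra! hall
    choose! q hq hq' using hall
    have := Finset.card_le_card_of_injOn (s := Finset.range (2 ^ 2 ^ k))
      (t := Finset.range (2 ^ 2 ^ k - 1)) q (fun s hs => by simpa using hq s (by simpa using hs))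
      (fun a ha b hb hab => by
        have h1 := hq' a (by simpa using ha)
        have h2 := hq' b (by simpa using hb)
        rw [hab, h2] at h1
        exact (Option.some.inj h1).symm)
    have hpos : 0 < 2 ^ 2 ^ k := by positivity
    simp only [Finset.card_range] at this
    omega
  have hex' : ∃ s, ¬ Hit T k s := hex.imp fun _ h => h.2
  obtain ⟨s, hs, hns⟩ := hex
  exact ⟨Nat.find hex', (Nat.find_min' hex' hns).trans_lt hs, Nat.find_spec hex',
    fun s' h => not_not.1 (Nat.find_min hex' h)⟩

/-- On a block assigned to a code that converges with value `T`, membership in `diagSet` is given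
by the bits of the least value not hit: all parameters of a witness are determined. -/
theorem mem_diagSet_iff {k i T s y : ℕ} (hi : k % 2 ^ i = 0) (hi' : k % 2 ^ (i + 1) ≠ 0)
    (hT : T ∈ Code.eval (Denumerable.ofNat Code i) (2 ^ 2 ^ k)) (hs : ¬ Hit T k s)
    (hs' : ∀ s' < s, Hit T k s') (hy : 2 ^ k ≤ y) (hy' : y < 2 ^ (k + 1)) :
    y ∈ diagSet ↔ s / 2 ^ (2 ^ (k + 1) - 1 - y) % 2 = 1 := by
  constructor
  · rintro ⟨k₁, i₁, u, T₁, s₁, h1, h2, h3, h4, h5, h6, h7, h8⟩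
    have hk : k₁ = k := by
      have a := (Nat.pow_lt_pow_iff_right (a := 2) (by norm_num)).1 (h1.trans_lt hy')
      have b := (Nat.pow_lt_pow_iff_right (a := 2) (by norm_num)).1 (hy.trans_lt h2)
      omega
    subst hk
    have key : ∀ {a b : ℕ}, k₁ % 2 ^ a = 0 → k₁ % 2 ^ (b + 1) ≠ 0 → a ≤ b := by
      intro a b ha hb
      by_contra! hab
      exact hb (Nat.mod_eq_zero_of_dvd
        ((pow_dvd_pow 2 hab).trans (Nat.dvd_of_mod_eq_zero ha)))
    have hii : i₁ = i := le_antisymm (key h3 hi') (key hi h4)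
    subst hii
    have hTT : T₁ = T := Part.mem_unique (Code.evaln_sound h5) hT
    subst hTT
    have hss : s₁ = s := by
      rcases lt_trichotomy s₁ s with h | h | h
      · exact absurd (hs' _ h) h6
      · exact h
      · exact absurd (h7 _ h) hs
    exact hss ▸ h8
  · intro h
    obtain ⟨u, hu⟩ := Code.evaln_complete.1 hT
    exact ⟨k, i, u, T, s, hy, hy', hi, hi', hu, hs, hs', h⟩

theorem prefEncode_bounds (ω : ℕ → Bool) (n : ℕ) :
    2 ^ n ≤ prefEncode ω n + 1 ∧ prefEncode ω n + 1 < 2 ^ (n + 1) := by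
  induction n with
  | zero => simp [prefEncode]
  | succ n ih => rw [prefEncode, pow_succ 2 (n + 1), pow_succ 2 n] at *; split_ifs <;> omega

theorem strLen_prefEncode (ω : ℕ → Bool) (n : ℕ) : strLen (prefEncode ω n) = n := by
  obtain ⟨h1, h2⟩ := prefEncode_bounds ω n
  rw [strLen, Nat.log2_eq_iff (by omega)]
  exact ⟨h1, h2⟩

theorem testBit_prefEncode (ω : ℕ → Bool) {n j : ℕ} (hj : j < n) :
    (prefEncode ω n + 1).testBit (n - 1 - j) = ω j := by
  induction n with
  | zero => omega
  | succ n ih =>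
    have hdiv : (prefEncode ω (n + 1) + 1) / 2 = prefEncode ω n + 1 := by
      rw [prefEncode]; split_ifs <;> omega
    rcases Nat.lt_succ_iff_lt_or_eq.1 hj with h | rfl
    · rw [show n + 1 - 1 - j = (n - 1 - j) + 1 by omega, Nat.testBit_succ, hdiv, ih h]
    · rw [show j + 1 - 1 - j = 0 by omega, Nat.testBit_zero, prefEncode]
      cases ω j <;> simp <;> omega

/-- Every initial segment of the characteristic sequence reaching beyond block `k` carries in that
block the value that was not hit. -/
theorem block_prefEncode {k i T s n : ℕ} (hi : k % 2 ^ i = 0) (hi' : k % 2 ^ (i + 1) ≠ 0)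
    (hT : T ∈ Code.eval (Denumerable.ofNat Code i) (2 ^ 2 ^ k)) (hs : ¬ Hit T k s)
    (hs' : ∀ s' < s, Hit T k s') (hlt : s < 2 ^ 2 ^ k) (hn : 2 ^ (k + 1) ≤ n) :
    block k n (prefEncode (chi diagSet) n) = s := by
  apply Nat.eq_of_testBit_eq
  intro b
  have hpow : 2 ^ (k + 1) = 2 ^ k + 2 ^ k := by rw [pow_succ]; ring
  rw [block, Nat.testBit_mod_two_pow]
  by_cases hb : b < 2 ^ k
  · -- Bit `b` of the block value is the bit of the string at position `2 ^ (k + 1) - 1 - b`.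
    have hmem := mem_diagSet_iff (y := 2 ^ (k + 1) - 1 - b) hi hi' hT hs hs' (by omega) (by omega)
    have hbit := testBit_prefEncode (chi diagSet) (n := n) (j := 2 ^ (k + 1) - 1 - b - 1) (by omega)
    rw [Nat.testBit_div_two_pow, show b + (n + 1 - 2 ^ (k + 1)) = n - 1 - (2 ^ (k + 1) - 1 - b - 1) by
      omega, hbit, chi, show 2 ^ (k + 1) - 1 - b - 1 + 1 = 2 ^ (k + 1) - 1 - b by omega, hmem,
      show 2 ^ (k + 1) - 1 - (2 ^ (k + 1) - 1 - b) = b by omega, Nat.testBit_eq_decide_div_mod_eq]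
    simp [hb]
  · rw [Nat.testBit_lt_two_pow (hlt.trans_le (Nat.pow_le_pow_right (by norm_num) (by omega)))]
    simp [hb]

/-! ### Assigned blocks and the complexity bound -/

/-- Some code computes a total function whose value at `N` bounds `t` on all arguments below `N`,
namely the sum of these values of `t`. -/
theorem exists_majorant {t : ℕ → ℕ} (ht : Computable t) :
    ∃ i : ℕ, ∀ N, ∃ T, T ∈ Code.eval (Denumerable.ofNat Code i) N ∧ ∀ n < N, t n ≤ T := by
  let M : ℕ → ℕ := fun N => Nat.rec 0 (fun n acc => acc + t n) N
  have hstep : Computable₂ fun (_ : ℕ) (a : ℕ × ℕ) => a.2 + t a.1 :=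
    Primrec.nat_add.to_comp.comp (Computable.snd.comp Computable.snd)
      (ht.comp (Computable.fst.comp Computable.snd))
  have hM : Computable M := Computable.nat_rec Computable.id (Computable.const 0) hstep
  obtain ⟨c, hc⟩ := Code.exists_code.1 (Partrec.nat_iff.1 hM.partrec)
  refine ⟨Encodable.encode c, fun N => ⟨M N, ?_, ?_⟩⟩
  · rw [Denumerable.ofNat_encode, hc]; simp
  · intro n hn
    induction N with
    | zero => omega
    | succ N ih =>
      change t n ≤ M N + t N
      rcases Nat.lt_succ_iff_lt_or_eq.1 hn with h | rfl
      · exact (ih h).trans (Nat.le_add_right _ _)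
      · exact Nat.le_add_left _ _

/-- A block whose index is exactly divisible by `2^i` occurs in every window of
`2^(i+1)` consecutive positive numbers. -/
theorem exists_index (i q : ℕ) (hq : 2 ^ (i + 1) ≤ q) :
    ∃ k, k ≤ q ∧ q < k + 2 ^ (i + 1) ∧ k % 2 ^ i = 0 ∧ k % 2 ^ (i + 1) ≠ 0 := by
  have hpos : 0 < 2 ^ i := by positivity
  have hpow : 2 ^ (i + 1) = 2 * 2 ^ i := by rw [pow_succ]; ring
  have hdm := Nat.div_add_mod (q - 2 ^ i) (2 ^ (i + 1))
  have hml := Nat.mod_lt (q - 2 ^ i) (show 0 < 2 ^ (i + 1) by positivity)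
  set a := (q - 2 ^ i) / 2 ^ (i + 1)
  refine ⟨2 ^ (i + 1) * a + 2 ^ i, by omega, by omega, ?_, ?_⟩
  · rw [hpow, mul_comm 2, mul_assoc, Nat.mul_add_mod, Nat.mod_self]
  · rw [Nat.mul_add_mod, Nat.mod_eq_of_lt (by omega)]; omega

theorem not_univBounded_zero {t : ℕ → ℕ} {n : ℕ} (hn : 1 ≤ n) (ω : ℕ → Bool) :
    ¬ univBounded t 0 n (prefEncode ω n) := by
  intro h
  have h0 : (Denumerable.ofNat Code 0) = Code.zero := by
    rw [Code.ofNatCode_eq, Code.ofNatCode]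
  have := Code.evaln_sound h
  rw [h0] at this
  have h1 := (prefEncode_bounds ω n).1
  have h2 : 2 ^ 1 ≤ 2 ^ n := Nat.pow_le_pow_right (by norm_num) hn
  have : prefEncode ω n = 0 := by simpa [Code.eval, pure, PFun.pure] using this
  omega

/-- The diagonalization: a program computing an initial segment within the time bound is so long
that its pair with the length does not occur in the search for any assigned block. -/
theorem pair_ge {t : ℕ → ℕ} {i : ℕ}
    (ht : ∀ N, ∃ T, T ∈ Code.eval (Denumerable.ofNat Code i) N ∧ ∀ n < N, t n ≤ T)
    {k n p : ℕ} (hi : k % 2 ^ i = 0) (hi' : k % 2 ^ (i + 1) ≠ 0) (hn : 2 ^ (k + 1) ≤ n)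
    (h : univBounded t p n (prefEncode (chi diagSet) n)) : 2 ^ 2 ^ k - 1 ≤ Nat.pair n p := by
  by_contra! hlt
  obtain ⟨T, hT, hb⟩ := ht (2 ^ 2 ^ k)
  obtain ⟨s, hs1, hs2, hs3⟩ := exists_not_hit T k
  refine hs2 ⟨Nat.pair n p, hlt, ?_⟩
  rw [univBounded, strLen_prefEncode] at h
  have h' := Code.evaln_mono (hb n (by have := Nat.left_le_pair n p; omega)) h
  rw [outBlock, Nat.unpair_pair]
  simp only
  rw [Option.mem_def.1 h', Option.map_some, block_prefEncode hi hi' hT hs2 hs3 hs1 hn]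

theorem two_mul_lt_two_pow {k : ℕ} (hk : 10 ≤ k) : 2 * k + 1 ≤ 2 ^ (k - 1) := by
  obtain ⟨m, rfl⟩ := Nat.exists_eq_add_of_le hk
  induction m with
  | zero => norm_num
  | succ m ih =>
    have := ih (by omega)
    rw [show 10 + (m + 1) - 1 = (10 + m - 1) + 1 by omega, pow_succ]
    omega

/-- If `n` is at most a factor `2 ^ (G + 1)` above `2 ^ k`, where `G + 10 ≤ k`, and the program `p`
has length below `2 ^ (k - 2)`, then the pair `(n, p)` occurs in the search for block `k`. -/
theorem pair_lt {k G n p : ℕ} (hk : G + 10 ≤ k) (hn : n < 2 ^ (k + 1 + G))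
    (hp : strLen p < 2 ^ (k - 2)) : Nat.pair n p < 2 ^ 2 ^ k - 1 := by
  have hk1 : 2 ^ (k - 1) = 2 * 2 ^ (k - 2) := by
    rw [show k - 1 = (k - 2) + 1 by omega, pow_succ]; ring
  have hk0 : 2 ^ k = 2 * 2 ^ (k - 1) := by
    rw [show k = (k - 1) + 1 by omega, pow_succ]; simp; ring
  have h2k := two_mul_lt_two_pow (show 10 ≤ k by omega)
  have h1 : n + 1 ≤ 2 ^ (2 ^ (k - 1) - 1) :=
    hn.trans_le (Nat.pow_le_pow_right (by norm_num) (by omega))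
  have h2 : p + 1 ≤ 2 ^ (2 ^ (k - 1) - 1) := by
    have : p + 1 < 2 ^ (2 ^ (k - 2)) := (Nat.log2_lt (by omega)).1 hp
    exact this.le.trans (Nat.pow_le_pow_right (by norm_num) (by omega))
  have h3 : (max n p + 1) ^ 2 ≤ (2 ^ (2 ^ (k - 1) - 1)) ^ 2 :=
    Nat.pow_le_pow_left (by omega) 2
  have h4 := Nat.pair_lt_max_add_one_sq n p
  rw [← pow_mul] at h3
  have h5 : 2 ^ 2 ^ k = 4 * 2 ^ ((2 ^ (k - 1) - 1) * 2) := by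
    rw [show 2 ^ k = (2 ^ (k - 1) - 1) * 2 + 2 by omega, pow_add]; ring
  have h6 : 0 < 2 ^ ((2 ^ (k - 1) - 1) * 2) := by positivity
  omega

/-- Barzdins's lemma, item (ii): there is an r.e. set `A` with characteristic sequence `χ`
such that for every total recursive `t` there is `0 < c_t < 1` with
`C^t(χ_{1:n}|n) ≥ c_t · n` for all `n ≥ 1`. -/
theorem stmt8 :
    ∃ A : Set ℕ, isRE A ∧
      ∀ t : ℕ → ℕ, Computable t →
        ∃ c_t : ℝ, 0 < c_t ∧ c_t < 1 ∧
          ∀ n : ℕ, 1 ≤ n →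
            (⌈c_t * n⌉₊ : ℕ∞) ≤ KCt t (prefEncode (chi A) n) n := by
  refine ⟨diagSet, isRE_diagSet, fun t ht => ?_⟩
  obtain ⟨i, hi⟩ := exists_majorant ht
  set G := 2 ^ (i + 1) with hG
  -- For lengths up to `2 ^ (2 * G + 20)` the claim is `1 ≤ |p|`; for longer ones it comes from an
  -- assigned block less than `G` blocks before the last complete one.
  refine ⟨1 / 2 ^ (2 * G + 20), by positivity, ?_, fun n hn => ?_⟩
  · rw [div_lt_one (by positivity)]
    exact one_lt_pow₀ (by norm_num) (by omega)
  refine le_sInf ?_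
  rintro _ ⟨p, rfl, h⟩
  norm_cast
  by_contra! hlt
  have hlt' : strLen p * 2 ^ (2 * G + 20) < n := by
    have := Nat.lt_ceil.1 hlt
    rw [one_div, inv_mul_eq_div, lt_div_iff₀ (by positivity)] at this
    exact_mod_cast this
  have hp0 : 1 ≤ strLen p := by
    by_contra! h0
    have : p + 1 < 2 ^ 1 := (Nat.log2_lt (by omega)).1 h0
    have hp : p = 0 := by omega
    subst hp
    exact not_univBounded_zero hn _ h
  have hq1 := Nat.log2_self_le (show n ≠ 0 by omega)
  have hq2 := Nat.lt_log2_self (n := n)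
  set q := n.log2
  have hq : 2 * G + 20 ≤ q := by
    have : 2 ^ (2 * G + 20) < 2 ^ (q + 1) := by nlinarith
    have := (Nat.pow_lt_pow_iff_right (a := 2) (by norm_num)).1 this
    omega
  obtain ⟨k, hk1, hk2, hk3, hk4⟩ := exists_index i (q - 1) (by omega)
  refine absurd (pair_ge hi hk3 hk4 ?_ h) (not_le.2 (pair_lt (G := G) (by omega) ?_ ?_))
  · exact (Nat.pow_le_pow_right (by norm_num) (by omega)).trans hq1
  · exact hq2.trans_le (Nat.pow_le_pow_right (by norm_num) (by omega))
  · have h1 : strLen p * 2 ^ (2 * G + 20) < 2 ^ (k - 2) * 2 ^ (2 * G + 20) := by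
      rw [← pow_add]
      exact (hlt'.trans hq2).trans_le (Nat.pow_le_pow_right (by norm_num) (by omega))
    exact lt_of_mul_lt_mul_right h1 (by positivity)
end

section
/- There exists a recursively enumerable set A ⊆ ℕ whose characteristic sequence χ satisfies C(χ_{1:n}) ≥ log n for every n ≥ 1. -/
/-!
The set `A` is built by diagonalisation: a program `p` is given a position `i`, and `i` is put
into `A` exactly when `U(p, ε)` halts with a string whose `i`-th bit exists and is `0`. Then `p`
outputs no prefix of `χ` of length at least `i`. For the bound with no additive constant, programs
of length `ℓ` need positions at most `2 ^ ℓ + 1`, but there are `2 ^ (ℓ + 1) - 1` programs of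
length at most `ℓ`, about twice as many as positions. So half of the programs must be discarded,
and this uses the concrete numbering of codes in Mathlib.

It is enough to defeat programs that are the least ones for their output on input `0`. Such a
program is never `prec f g` (which agrees with `f` at `0`); in `pair f g` both `f` and `g` are
again least for their outputs; in `comp f g` so is `g`, and neither `f` nor `g` is `zero`; and in
`rfind' f` the code `f` is neither `right` nor itself an `rfind'`, since then only the output `0`
is possible. The decidable predicate `adm` records these closure conditions recursively
(`adm_of_minimal`).

If `S` bounds the components of the pairs involved, the conditions give the recursive estimate
`rk_rec` for the number `rk x` of admissible programs below `x`, and strong induction then yields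
`2 * rk x ≤ x + 2` (`rk_le`): asymptotically, with density `1/2` below `S`, pairs, compositions
and minimisations contribute at most `1/16 + 1/8 + 3/16 < 1/2`. Hence the rank `rk p` of `p` among
the admissible programs is an injective position assignment with `rk p ≤ 2 ^ ℓ`. Both `adm` and
`rk` are primitive recursive, so `A` is recursively enumerable.
-/

open Filter Set

open Nat.Partrec (Code)

/-! ### Admissible programs -/

/-- One step of the recursion defining `adm`, with `V` in place of the recursive calls. A program
`p ≥ 4` encodes `pair`, `prec`, `comp` or `rfind'` according to `p % 4 = 0, 1, 2, 3`; in the cases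
`pair` and `comp` the components are the entries of `(p / 4 - 1).unpair`. The condition `8 ≤ p`
excludes `pair zero zero`, and `p % 16 = 3` holds for `right` and for `rfind' f` with `f` equal to
`right` or of the form `rfind' g`. -/
def admStep (V : ℕ → Bool) (p : ℕ) : Bool :=
  decide (p < 2) ||
  (decide (p % 4 = 0) && decide (8 ≤ p) && V (p / 4 - 1).unpair.1 && V (p / 4 - 1).unpair.2) ||
  (decide (p % 4 = 2) && decide (6 ≤ p) && !decide ((p / 4 - 1).unpair.1 = 0) &&
    !decide ((p / 4 - 1).unpair.2 = 0) && V (p / 4 - 1).unpair.2) ||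
  (decide (p % 4 = 3) && !decide (p % 16 = 3))

/-- Admissible programs: a decidable property shared by all programs that are least among those
producing the same output on input `0`. -/
def adm (p : ℕ) : Bool :=
  admStep (fun q => if _h : q < p then adm q else false) p
termination_by p

theorem adm_eq (p : ℕ) : adm p = admStep adm p := by
  rw [adm]
  unfold admStep
  have h1 := (p / 4 - 1).unpair_left_le
  have h2 := (p / 4 - 1).unpair_right_le
  by_cases hp : p < 4
  · have h8 : ¬ 8 ≤ p := by omega
    have h6 : ¬ 6 ≤ p := by omega
    simp [h8, h6]
  · have h3 : (p / 4 - 1).unpair.1 < p := by omega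
    have h4 : (p / 4 - 1).unpair.2 < p := by omega
    simp [h3, h4]

theorem adm_iff (p : ℕ) : adm p = true ↔ p < 2 ∨
    (p % 4 = 0 ∧ 8 ≤ p ∧ adm (p / 4 - 1).unpair.1 = true ∧ adm (p / 4 - 1).unpair.2 = true) ∨
    (p % 4 = 2 ∧ 6 ≤ p ∧ (p / 4 - 1).unpair.1 ≠ 0 ∧ (p / 4 - 1).unpair.2 ≠ 0 ∧
      adm (p / 4 - 1).unpair.2 = true) ∨
    (p % 4 = 3 ∧ p % 16 ≠ 3) := by
  rw [adm_eq, admStep]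
  simp only [Bool.or_eq_true, Bool.and_eq_true, Bool.not_eq_true', decide_eq_true_eq,
    decide_eq_false_iff_not, and_assoc, or_assoc, ne_eq]

theorem adm_primrec : Primrec adm := by
  have hu : Primrec fun a : Unit × List Bool => (a.2.length / 4 - 1).unpair :=
    Primrec.unpair.comp (Primrec.nat_sub.comp (Primrec.nat_div.comp
      (Primrec.list_length.comp Primrec.snd) (Primrec.const 4)) (Primrec.const 1))
  have hn : Primrec fun a : Unit × List Bool => a.2.length :=
    Primrec.list_length.comp Primrec.snd
  have hV1 : Primrec fun a : Unit × List Bool =>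
      a.2.getD (a.2.length / 4 - 1).unpair.1 false :=
    (Primrec.list_getD false).comp Primrec.snd (Primrec.fst.comp hu)
  have hV2 : Primrec fun a : Unit × List Bool =>
      a.2.getD (a.2.length / 4 - 1).unpair.2 false :=
    (Primrec.list_getD false).comp Primrec.snd (Primrec.snd.comp hu)
  have hmod (k j : ℕ) : Primrec fun a : Unit × List Bool => decide (a.2.length % k = j) :=
    (Primrec.eq.comp (Primrec.nat_mod.comp hn (Primrec.const k)) (Primrec.const j)).decide
  have hle (k : ℕ) : Primrec fun a : Unit × List Bool => decide (k ≤ a.2.length) :=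
    (Primrec.nat_le.comp (Primrec.const k) hn).decide
  have hlt : Primrec fun a : Unit × List Bool => decide (a.2.length < 2) :=
    (Primrec.nat_lt.comp hn (Primrec.const 2)).decide
  have hz1 : Primrec fun a : Unit × List Bool =>
      decide ((a.2.length / 4 - 1).unpair.1 = 0) :=
    (Primrec.eq.comp (Primrec.fst.comp hu) (Primrec.const 0)).decide
  have hz2 : Primrec fun a : Unit × List Bool =>
      decide ((a.2.length / 4 - 1).unpair.2 = 0) :=
    (Primrec.eq.comp (Primrec.snd.comp hu) (Primrec.const 0)).decide
  have hg : Primrec fun a : Unit × List Bool =>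
      admStep (fun q => a.2.getD q false) a.2.length :=
    Primrec.or.comp (Primrec.or.comp (Primrec.or.comp hlt
      (Primrec.and.comp (Primrec.and.comp (Primrec.and.comp (hmod 4 0) (hle 8)) hV1) hV2))
      (Primrec.and.comp (Primrec.and.comp (Primrec.and.comp (Primrec.and.comp (hmod 4 2) (hle 6))
        (Primrec.not.comp hz1)) (Primrec.not.comp hz2)) hV2))
      (Primrec.and.comp (hmod 4 3) (Primrec.not.comp (hmod 16 3)))
  have key : Primrec₂ fun (_ : Unit) n => adm n := by
    refine Primrec.nat_strong_rec _
      (g := fun _ l => some (admStep (fun q => l.getD q false) l.length))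
      (Primrec.option_some.comp hg) fun _ n => ?_
    rw [adm]
    simp only [List.length_map, List.length_range, Option.some.injEq]
    congr 1
    funext q
    by_cases h : q < n <;> simp [h]
  exact key.comp (Primrec.const ()) Primrec.id

/-- The number of admissible programs below `p`. -/
def rk (p : ℕ) : ℕ := Nat.count (fun q => adm q = true) p

theorem rk_primrec : Primrec rk := by
  have : Primrec fun n : ℕ =>
      (Nat.rec 0 (fun q r => if adm q = true then r + 1 else r) n : ℕ) :=
    Primrec.nat_rec₁ 0 (Primrec.ite
      (Primrec.eq.comp (adm_primrec.comp Primrec.fst) (Primrec.const true))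
      (Primrec.succ.comp Primrec.snd) Primrec.snd)
  refine this.of_eq fun n => ?_
  induction n with
  | zero => simp [rk]
  | succ n ih =>
    simp only [rk, Nat.count_succ] at ih ⊢
    rw [← ih]
    split <;> simp

theorem rk_inj {p q : ℕ} (hp : adm p = true) (hq : adm q = true) (h : rk p = rk q) : p = q :=
  Nat.count_injective hp hq h

/-! ### Minimal programs are admissible -/

theorem encode_pair (f g : Code) : Encodable.encode (Code.pair f g) =
    4 * Nat.pair (Encodable.encode f) (Encodable.encode g) + 4 := by
  simp only [Code.encodeCode_eq, Code.encodeCode]; ring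

theorem encode_comp (f g : Code) : Encodable.encode (Code.comp f g) =
    4 * Nat.pair (Encodable.encode f) (Encodable.encode g) + 6 := by
  simp only [Code.encodeCode_eq, Code.encodeCode]; ring

theorem encode_prec (f g : Code) : Encodable.encode (Code.prec f g) =
    4 * Nat.pair (Encodable.encode f) (Encodable.encode g) + 5 := by
  simp only [Code.encodeCode_eq, Code.encodeCode]; ring

theorem encode_rfind (f : Code) : Encodable.encode (Code.rfind' f) =
    4 * Encodable.encode f + 7 := by
  simp only [Code.encodeCode_eq, Code.encodeCode]; ring

theorem encode_zero : Encodable.encode Code.zero = 0 := by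
  simp only [Code.encodeCode_eq, Code.encodeCode]

theorem mem_zero : 0 ∈ Code.eval Code.zero 0 := by
  simp [Code.eval, pure, PFun.pure]

theorem mem_pair {f g : Code} {x : ℕ} : x ∈ Code.eval (Code.pair f g) 0 ↔
    ∃ a ∈ Code.eval f 0, ∃ b ∈ Code.eval g 0, x = Nat.pair a b := by
  simp [Code.eval, Seq.seq, eq_comm]

theorem mem_comp {f g : Code} {x y : ℕ} : x ∈ Code.eval (Code.comp f g) y ↔
    ∃ b ∈ Code.eval g y, x ∈ Code.eval f b := by
  exact Part.mem_bind_iff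

theorem eval_prec_at_zero (f g : Code) : Code.eval (Code.prec f g) 0 = Code.eval f 0 :=
  Code.eval_prec_zero f g 0

/-- A value of `rfind'` at `(0, m)` is at least `m`, as the search starts there. -/
theorem mem_rfind_spec {f : Code} {x m : ℕ} (h : x ∈ Code.eval (Code.rfind' f) (Nat.pair 0 m)) :
    m ≤ x ∧ 0 ∈ Code.eval f (Nat.pair 0 x) := by
  simp only [Code.eval, Nat.unpaired, Nat.unpair_pair, Part.mem_map_iff] at h
  obtain ⟨n, hn, rfl⟩ := h
  refine ⟨by omega, ?_⟩
  have := Nat.rfind_spec hn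
  simpa using this

/-- If `c` has the least code number among all codes with output `x` on input `0`, it is
admissible. Minimality passes to components because `Nat.pair` is increasing in each argument. -/
theorem adm_of_minimal (c : Code) : ∀ x, x ∈ Code.eval c 0 →
    (∀ d : Code, x ∈ Code.eval d 0 → Encodable.encode c ≤ Encodable.encode d) →
    adm (Encodable.encode c) = true := by
  -- `zero` is the least program with output `0`
  have h0 : ∀ (c : Code) (x : ℕ), (∀ d : Code, x ∈ Code.eval d 0 →
      Encodable.encode c ≤ Encodable.encode d) → x = 0 → Encodable.encode c = 0 := by
    rintro c x h rfl
    have := h Code.zero mem_zero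
    rw [encode_zero] at this
    omega
  have hz : ∀ f : Code, Encodable.encode f = 0 → f = Code.zero := fun f h =>
    Encodable.encode_injective (h.trans encode_zero.symm)
  induction c with
  | zero => intro x _ _; rw [adm_iff, encode_zero]; simp
  | succ => intro x _ _; rw [adm_iff]; simp [Code.encodeCode_eq, Code.encodeCode]
  | left =>
    intro x hx hmin
    have := h0 _ x hmin (by simpa [Code.eval] using hx)
    simp [Code.encodeCode_eq, Code.encodeCode] at this
  | right =>
    intro x hx hmin
    have := h0 _ x hmin (by simpa [Code.eval] using hx)
    simp [Code.encodeCode_eq, Code.encodeCode] at this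
  | pair f g ihf ihg =>
    intro x hx hmin
    obtain ⟨a, ha, b, hb, hab⟩ := mem_pair.1 hx
    have hf := ihf a ha fun d hd => by
      have := hmin (Code.pair d g) (mem_pair.2 ⟨a, hd, b, hb, hab⟩)
      rw [encode_pair, encode_pair] at this
      by_contra! hlt
      have := Nat.pair_lt_pair_left (Encodable.encode g) hlt
      omega
    have hg := ihg b hb fun d hd => by
      have := hmin (Code.pair f d) (mem_pair.2 ⟨a, ha, b, hd, hab⟩)
      rw [encode_pair, encode_pair] at this
      by_contra! hlt
      have := Nat.pair_lt_pair_right (Encodable.encode f) hlt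
      omega
    have hpos : Nat.pair (Encodable.encode f) (Encodable.encode g) ≠ 0 := by
      intro h
      have h1 := Nat.left_le_pair (Encodable.encode f) (Encodable.encode g)
      have h2 := Nat.right_le_pair (Encodable.encode f) (Encodable.encode g)
      obtain rfl := hz f (by omega)
      obtain rfl := hz g (by omega)
      have ha0 := Part.mem_unique ha mem_zero
      have hb0 := Part.mem_unique hb mem_zero
      have := h0 _ x hmin (by rw [hab, ha0, hb0]; rfl)
      rw [encode_pair] at this
      omega
    rw [adm_iff, encode_pair]
    have e : (4 * Nat.pair (Encodable.encode f) (Encodable.encode g) + 4) / 4 - 1 =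
      Nat.pair (Encodable.encode f) (Encodable.encode g) := by omega
    rw [e, Nat.unpair_pair]
    exact Or.inr (Or.inl ⟨by omega, by omega, hf, hg⟩)
  | comp f g ihf ihg =>
    intro x hx hmin
    obtain ⟨b, hb, hxb⟩ := mem_comp.1 hx
    have hg := ihg b hb fun d hd => by
      have := hmin (Code.comp f d) (mem_comp.2 ⟨b, hd, hxb⟩)
      rw [encode_comp, encode_comp] at this
      by_contra! hlt
      have := Nat.pair_lt_pair_right (Encodable.encode f) hlt
      omega
    have hf0 : Encodable.encode f ≠ 0 := by
      intro h
      obtain rfl := hz f h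
      have := h0 _ x hmin (by simpa [Code.eval, pure, PFun.pure] using hxb)
      rw [encode_comp] at this
      omega
    have hg0 : Encodable.encode g ≠ 0 := by
      intro h
      obtain rfl := hz g h
      obtain rfl := Part.mem_unique hb mem_zero
      have := hmin f hxb
      rw [encode_comp] at this
      have h1 := Nat.left_le_pair (Encodable.encode f) (Encodable.encode Code.zero)
      omega
    rw [adm_iff, encode_comp]
    have e : (4 * Nat.pair (Encodable.encode f) (Encodable.encode g) + 6) / 4 - 1 =
      Nat.pair (Encodable.encode f) (Encodable.encode g) := by omega
    rw [e, Nat.unpair_pair]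
    exact Or.inr (Or.inr (Or.inl ⟨by omega, by omega, hf0, hg0, hg⟩))
  | prec f g _ _ =>
    intro x hx hmin
    rw [eval_prec_at_zero] at hx
    have := hmin f hx
    rw [encode_prec] at this
    have h1 := Nat.left_le_pair (Encodable.encode f) (Encodable.encode g)
    omega
  | rfind' f _ =>
    intro x hx hmin
    have hx0 : x ≠ 0 := by
      intro h
      have := h0 _ x hmin h
      rw [encode_rfind] at this
      omega
    obtain ⟨-, hf⟩ := mem_rfind_spec (m := 0) hx
    rw [adm_iff, encode_rfind]
    refine Or.inr (Or.inr (Or.inr ⟨by omega, fun h => ?_⟩))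
    -- `f` is `right` or again a minimisation, and its value at `(0, x)` is at least `x`
    cases f with
    | zero => rw [encode_zero] at h; omega
    | succ => simp [Code.encodeCode_eq, Code.encodeCode] at h
    | left => simp [Code.encodeCode_eq, Code.encodeCode] at h
    | right => exact hx0 (by simpa [Code.eval, eq_comm] using hf)
    | pair f g => rw [encode_pair] at h; omega
    | comp f g => rw [encode_comp] at h; omega
    | prec f g => rw [encode_prec] at h; omega
    | rfind' f => exact hx0 (by have := (mem_rfind_spec hf).1; omega)

theorem adm_of_univ_minimal {p x : ℕ} (hx : x ∈ univ p 0)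
    (hmin : ∀ q, x ∈ univ q 0 → p ≤ q) : adm p = true := by
  have h := adm_of_minimal (Denumerable.ofNat Code p) x hx fun d hd => by
    rw [Denumerable.encode_ofNat]
    exact hmin _ (by rw [_root_.univ, Denumerable.ofNat_encode]; exact hd)
  rwa [Denumerable.encode_ofNat] at h

/-! ### Counting admissible programs -/

theorem rk_succ (n : ℕ) : rk (n + 1) = rk n + if adm n = true then 1 else 0 :=
  Nat.count_succ _ _

theorem card_rfind (x : ℕ) :
    16 * ((Finset.range x).filter fun p => p % 4 = 3 ∧ p % 16 ≠ 3).card ≤ 3 * x := by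
  have : ((Finset.range x).filter fun p => p % 4 = 3 ∧ p % 16 ≠ 3).card =
      (x + 8) / 16 + (x + 4) / 16 + x / 16 := by
    rw [← Nat.count_eq_card_filter_range]
    induction x with
    | zero => simp
    | succ n ih =>
      rw [Nat.count_succ, ih]
      split <;> omega
  omega

/-- Admissible programs below `x` are `0`, `1`, pairs of two admissible programs below `S` other
than `pair zero zero`, compositions with admissible nonzero inner program, and minimisations. -/
theorem rk_rec (x S : ℕ) (hS : 2 ≤ S) (hx : x ≤ 4 * S ^ 2 + 4) :
    16 * rk x ≤ 16 * (2 + (rk S * rk S - 1) + (S - 1) * (rk S - 1)) + 3 * x := by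
  classical
  have hR := card_rfind x
  set R := (Finset.range x).filter fun p => p % 4 = 3 ∧ p % 16 ≠ 3 with hRdef
  set V := (Finset.range S).filter fun p => adm p = true with hV
  have hVc : V.card = rk S := (Nat.count_eq_card_filter_range _ _).symm
  have h0V : 0 ∈ V := by
    simp only [hV, Finset.mem_filter, Finset.mem_range]
    exact ⟨by omega, (adm_iff 0).2 (by simp)⟩
  have hsub : (Finset.range x).filter (fun p => adm p = true) ⊆
      {0, 1} ∪ ((V ×ˢ V).erase (0, 0)).image (fun ab => 4 * Nat.pair ab.1 ab.2 + 4) ∪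
      ((Finset.range S).erase 0 ×ˢ V.erase 0).image (fun ab => 4 * Nat.pair ab.1 ab.2 + 6) ∪
      R := by
    intro p hp
    simp only [Finset.mem_filter, Finset.mem_range] at hp
    obtain ⟨hpx, hp⟩ := hp
    have hlt (h4 : 4 ≤ p) : (p / 4 - 1).unpair.1 < S ∧ (p / 4 - 1).unpair.2 < S := by
      have h1 := Nat.max_sq_add_min_le_pair (p / 4 - 1).unpair.1 (p / 4 - 1).unpair.2
      rw [Nat.pair_unpair] at h1
      have h2 : max (p / 4 - 1).unpair.1 (p / 4 - 1).unpair.2 < S := by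
        apply lt_of_pow_lt_pow_left₀ 2 (Nat.zero_le S)
        omega
      exact max_lt_iff.1 h2
    simp only [Finset.mem_union, Finset.mem_image, Finset.mem_erase, Finset.mem_product,
      Finset.mem_insert, Finset.mem_singleton, Finset.mem_range, hV, hRdef, Finset.mem_filter]
    rcases (adm_iff p).1 hp with h | ⟨h4, h8, ha, hb⟩ | ⟨h4, h6, ha, hb, hc⟩ | h
    · left; left; left; omega
    · obtain ⟨l1, l2⟩ := hlt (by omega)
      refine Or.inl (Or.inl (Or.inr ⟨(p / 4 - 1).unpair, ⟨fun h => ?_, ⟨l1, ha⟩, l2, hb⟩, ?_⟩))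
      · have := Nat.pair_unpair (p / 4 - 1)
        rw [h] at this
        have e : Nat.pair 0 0 = 0 := rfl
        simp only [e] at this
        omega
      · rw [Nat.pair_unpair]; omega
    · obtain ⟨l1, l2⟩ := hlt (by omega)
      refine Or.inl (Or.inr ⟨(p / 4 - 1).unpair, ⟨⟨ha, l1⟩, hb, l2, hc⟩, ?_⟩)
      rw [Nat.pair_unpair]; omega
    · exact Or.inr ⟨hpx, h⟩
  have hcard := Finset.card_le_card hsub
  rw [← Nat.count_eq_card_filter_range] at hcard
  change rk x ≤ _ at hcard
  have c1 := Finset.card_union_le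
    ({0, 1} ∪ ((V ×ˢ V).erase (0, 0)).image (fun ab => 4 * Nat.pair ab.1 ab.2 + 4) ∪
      ((Finset.range S).erase 0 ×ˢ V.erase 0).image (fun ab => 4 * Nat.pair ab.1 ab.2 + 6)) R
  have c2 := Finset.card_union_le
    ({0, 1} ∪ ((V ×ˢ V).erase (0, 0)).image (fun ab => 4 * Nat.pair ab.1 ab.2 + 4))
    (((Finset.range S).erase 0 ×ˢ V.erase 0).image (fun ab => 4 * Nat.pair ab.1 ab.2 + 6))
  have c3 := Finset.card_union_le ({0, 1} : Finset ℕ)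
    (((V ×ˢ V).erase (0, 0)).image (fun ab => 4 * Nat.pair ab.1 ab.2 + 4))
  have c4 : ({0, 1} : Finset ℕ).card = 2 := rfl
  have c5 := Finset.card_image_le (s := (V ×ˢ V).erase (0, 0))
    (f := fun ab => 4 * Nat.pair ab.1 ab.2 + 4)
  rw [Finset.card_erase_of_mem (Finset.mem_product.2 ⟨h0V, h0V⟩), Finset.card_product, hVc] at c5
  have c6 := Finset.card_image_le (s := (Finset.range S).erase 0 ×ˢ V.erase 0)
    (f := fun ab => 4 * Nat.pair ab.1 ab.2 + 6)
  rw [Finset.card_product, Finset.card_erase_of_mem (Finset.mem_range.2 (by omega)),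
    Finset.card_erase_of_mem h0V, Finset.card_range, hVc] at c6
  omega

theorem not_adm_small {p : ℕ} (h : adm p = true) (hp : p < 15) :
    p = 0 ∨ p = 1 ∨ p = 7 ∨ p = 8 ∨ p = 11 ∨ p = 12 := by
  have u0 : Nat.unpair 0 = (0, 0) := Nat.unpair_pair 0 0
  have u1 : Nat.unpair 1 = (0, 1) := Nat.unpair_pair 0 1
  have u2 : Nat.unpair 2 = (1, 0) := Nat.unpair_pair 1 0
  rw [adm_iff] at h
  interval_cases p <;> simp_all

/-- Base cases of `rk_le`, where the recursive estimate is too weak. -/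
theorem rk_small {x : ℕ} (hx : x ≤ 15) : 2 * rk x ≤ x + 2 ∧ (x ≤ 6 → rk x ≤ 2) := by
  have step (n : ℕ) : rk (n + 1) ≤ rk n + 1 := by rw [rk_succ]; split <;> omega
  have stay (n : ℕ) (h15 : n < 15)
      (h : ¬ (n = 0 ∨ n = 1 ∨ n = 7 ∨ n = 8 ∨ n = 11 ∨ n = 12)) : rk (n + 1) = rk n := by
    rw [rk_succ, if_neg fun ha => h (not_adm_small ha h15)]; rfl
  have r0 : rk 0 = 0 := Nat.count_zero _
  have r1 := step 0
  have r2 := step 1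
  have r3 := stay 2 (by simp) (by simp)
  have r4 := stay 3 (by simp) (by simp)
  have r5 := stay 4 (by simp) (by simp)
  have r6 := stay 5 (by simp) (by simp)
  have r7 := stay 6 (by simp) (by simp)
  have r8 := step 7
  have r9 := step 8
  have r10 := stay 9 (by simp) (by simp)
  have r11 := stay 10 (by simp) (by simp)
  have r12 := step 11
  have r13 := step 12
  have r14 := stay 13 (by simp) (by simp)
  have r15 := stay 14 (by simp) (by simp)
  norm_num at r1 r2 r3 r4 r5 r6 r7 r8 r9 r10 r11 r12 r13 r14 r15
  interval_cases x <;> omega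

/-- At most about half of the programs below `x` are admissible. -/
theorem rk_le (x : ℕ) : 2 * rk x ≤ x + 2 := by
  induction x using Nat.strong_induction_on with
  | _ x ih =>
    rcases le_or_gt x 15 with hx | hx
    · exact (rk_small hx).1
    -- the least `S` for which `rk_rec` applies, so that `x` is at least `4 * (S - 1) ^ 2 + 5`
    obtain ⟨S, hS⟩ : ∃ S, S = Nat.sqrt ((x - 5) / 4) + 1 := ⟨_, rfl⟩
    have h1 : (S - 1) * (S - 1) ≤ (x - 5) / 4 := by rw [hS]; exact Nat.sqrt_le _
    have h2 : (x - 5) / 4 < S * S := by rw [hS]; exact Nat.lt_succ_sqrt _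
    have hS2 : 2 ≤ S := by
      by_contra! h
      have : S * S ≤ 1 * 1 := Nat.mul_le_mul (by omega) (by omega)
      omega
    obtain ⟨T, rfl⟩ : ∃ T, S = T + 1 := ⟨S - 1, by omega⟩
    rw [Nat.add_sub_cancel] at h1
    have hrec := rk_rec x (T + 1) hS2 (by rw [pow_two]; omega)
    rw [Nat.add_sub_cancel] at hrec
    have h4 : 4 * (T * T) + 5 ≤ x := by omega
    have hlt : T + 1 < x := by nlinarith
    have hi := ih (T + 1) hlt
    have hT1 : 1 ≤ T := by omega
    have hmono : (rk (T + 1) * rk (T + 1) - 1) ≤ rk (T + 1) * rk (T + 1) := Nat.sub_le _ _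
    rcases le_or_gt T 5 with hT | hT
    · have hs : T + 1 ≤ 6 → rk (T + 1) ≤ 2 := (rk_small (by omega)).2
      generalize rk (T + 1) = n at *
      have hn := hs (by omega)
      interval_cases T <;> interval_cases n <;> omega
    · generalize rk (T + 1) = n at *
      have a1 : 4 * (n * n) ≤ (T + 3) * (T + 3) := by nlinarith
      have a2 : 2 * (T * (n - 1)) ≤ T * (T + 1) := by
        have : 2 * (n - 1) ≤ T + 1 := by omega
        nlinarith
      nlinarith

/-- The bit position `rk p` (counted from `0`) lies within the first `n` bits whenever
`n > 2 ^ |p|`. -/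
theorem rk_lt {p n : ℕ} (h : 2 ^ strLen p < n) : rk p < n := by
  have h1 := rk_le p
  have h2 : p + 1 < 2 ^ (strLen p + 1) := by
    rw [strLen, Nat.log2_eq_log_two]; exact Nat.lt_pow_succ_log_self (by norm_num) _
  rw [pow_succ] at h2
  omega

/-! ### Bits of encoded prefixes -/

theorem prefEncode_succ (ω : ℕ → Bool) (n : ℕ) :
    prefEncode ω (n + 1) + 1 = 2 * (prefEncode ω n + 1) + if ω n then 1 else 0 := by
  rw [prefEncode]; ring

/-- With a leading `1` added, the encoding is plain binary notation, so division by `2 ^ d`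
removes the last `d` bits. -/
theorem prefEncode_div (ω : ℕ → Bool) (k d : ℕ) :
    (prefEncode ω (k + d) + 1) / 2 ^ d = prefEncode ω k + 1 := by
  induction d with
  | zero => simp
  | succ d ih =>
    rw [← add_assoc, pow_succ', ← Nat.div_div_eq_div_mul, prefEncode_succ, ← ih]
    congr 1
    split <;> omega

/-- The string encoded by `x` has exactly `d` bits after its `i`-th bit, and that bit (counted
from `1`) is `0`. The binary expansion of `x + 1` is the string preceded by a `1`. -/
def bitZero (i d x : ℕ) : Bool :=
  decide (2 ^ i ≤ (x + 1) / 2 ^ d) && decide ((x + 1) / 2 ^ d < 2 ^ (i + 1)) &&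
    decide ((x + 1) / 2 ^ d % 2 = 0)

theorem bitZero_prefEncode (ω : ℕ → Bool) {j n : ℕ} (hj : j < n) :
    (∃ d, bitZero (j + 1) d (prefEncode ω n) = true) ↔ ω j = false := by
  have hpar : (prefEncode ω (j + 1) + 1) % 2 = 0 ↔ ω j = false := by
    rw [prefEncode_succ]
    cases ω j <;> simp
  constructor
  · rintro ⟨d, hd⟩
    simp only [bitZero, Bool.and_eq_true, decide_eq_true_eq] at hd
    obtain ⟨⟨h1, h2⟩, h3⟩ := hd
    have hdn : d ≤ n := by
      by_contra! h
      have h5 := (prefEncode_bounds ω n).2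
      have h6 : 2 ^ (n + 1) ≤ 2 ^ d := Nat.pow_le_pow_right (by norm_num) h
      rw [Nat.div_eq_of_lt (by omega)] at h1
      have := Nat.two_pow_pos (j + 1)
      omega
    obtain ⟨k, rfl⟩ := Nat.exists_eq_add_of_le' hdn
    rw [prefEncode_div] at h1 h2 h3
    have hb := prefEncode_bounds ω k
    have hk1 : j + 1 < k + 1 :=
      (Nat.pow_lt_pow_iff_right (by norm_num : 1 < 2)).1 (h1.trans_lt hb.2)
    have hk2 : k < j + 1 + 1 :=
      (Nat.pow_lt_pow_iff_right (by norm_num : 1 < 2)).1 (hb.1.trans_lt h2)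
    obtain rfl : k = j + 1 := by omega
    exact hpar.1 h3
  · intro h
    obtain ⟨d, rfl⟩ := Nat.exists_eq_add_of_le (show j + 1 ≤ n from hj)
    refine ⟨d, ?_⟩
    simp only [bitZero, Bool.and_eq_true, decide_eq_true_eq, prefEncode_div]
    exact ⟨prefEncode_bounds ω _, hpar.2 h⟩

/-! ### The enumerable set -/

/-- The test whose solvability in `t` defines membership of `i` in the set: `t` encodes
`(p, k, d)`, where `p` is the admissible program of rank `i - 1`, which halts on input `0` within
`k` steps with a string whose `i`-th bit is `0` and is followed by exactly `d` bits. -/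
def chk (i t : ℕ) : Bool :=
  adm t.unpair.1 && decide (rk t.unpair.1 + 1 = i) &&
    ((Code.evaln t.unpair.2.unpair.1 (Denumerable.ofNat Code t.unpair.1) 0).map
      (bitZero i t.unpair.2.unpair.2)).getD false

theorem pow_primrec : Primrec₂ ((· ^ ·) : ℕ → ℕ → ℕ) :=
  Primrec₂.unpaired'.1 Nat.Primrec.pow

theorem chk_primrec : Primrec₂ chk := by
  have ht : Primrec fun a : ℕ × ℕ => a.2.unpair := Primrec.unpair.comp Primrec.snd
  have hp := Primrec.fst.comp ht
  have hu : Primrec fun a : ℕ × ℕ => a.2.unpair.2.unpair :=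
    Primrec.unpair.comp (Primrec.snd.comp ht)
  have hev : Primrec fun a : ℕ × ℕ =>
      Code.evaln a.2.unpair.2.unpair.1 (Denumerable.ofNat Code a.2.unpair.1) 0 :=
    Code.primrec_evaln.comp (((Primrec.fst.comp hu).pair
      ((Primrec.ofNat Code).comp hp)).pair (Primrec.const 0))
  have hd : Primrec fun a : (ℕ × ℕ) × ℕ =>
      (a.2 + 1) / 2 ^ a.1.2.unpair.2.unpair.2 :=
    Primrec.nat_div.comp (Primrec.succ.comp Primrec.snd)
      (pow_primrec.comp (Primrec.const 2) ((Primrec.snd.comp hu).comp Primrec.fst))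
  have hi : Primrec fun a : (ℕ × ℕ) × ℕ => a.1.1 := Primrec.fst.comp Primrec.fst
  have hb : Primrec₂ fun (a : ℕ × ℕ) (x : ℕ) => bitZero a.1 a.2.unpair.2.unpair.2 x :=
    Primrec.and.comp (Primrec.and.comp
      (Primrec.nat_le.comp (pow_primrec.comp (Primrec.const 2) hi) hd).decide
      (Primrec.nat_lt.comp hd
        (pow_primrec.comp (Primrec.const 2) (Primrec.succ.comp hi))).decide)
      (Primrec.eq.comp (Primrec.nat_mod.comp hd (Primrec.const 2)) (Primrec.const 0)).decide
  exact Primrec.and.comp (Primrec.and.comp (adm_primrec.comp hp)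
    (Primrec.eq.comp (Primrec.succ.comp (rk_primrec.comp hp)) Primrec.fst).decide)
    (Primrec.option_getD.comp (Primrec.option_map hev hb) (Primrec.const false))

theorem exists_chk_iff {p x : ℕ} (hp : adm p = true) (hx : x ∈ _root_.univ p 0) :
    (∃ t, chk (rk p + 1) t = true) ↔ ∃ d, bitZero (rk p + 1) d x = true := by
  constructor
  · rintro ⟨t, ht⟩
    simp only [chk, Bool.and_eq_true, decide_eq_true_eq] at ht
    obtain ⟨⟨h1, h2⟩, h3⟩ := ht
    have e : t.unpair.1 = p := rk_inj h1 hp (by omega)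
    rw [e] at h3
    cases hev : Code.evaln t.unpair.2.unpair.1 (Denumerable.ofNat Code p) 0 with
    | none => simp [hev] at h3
    | some y =>
      obtain rfl : y = x := Part.mem_unique (Code.evaln_sound hev) hx
      exact ⟨t.unpair.2.unpair.2, by simpa [hev] using h3⟩
  · rintro ⟨d, hd⟩
    obtain ⟨k, hk⟩ := Code.evaln_complete.1 hx
    refine ⟨Nat.pair p (Nat.pair k d), ?_⟩
    rw [Option.mem_def] at hk
    simp [chk, hp, hk, hd]

/-- There is an r.e. set `A` whose characteristic sequence `χ` satisfies
`C(χ_{1:n}) ≥ log n` for every `n ≥ 1` (unconditional complexity: condition is the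
empty string, i.e. `0`). -/
theorem stmt9 :
    ∃ A : Set ℕ, isRE A ∧
      ∀ n : ℕ, 1 ≤ n → Real.logb 2 n ≤ (KC (prefEncode (chi A) n) 0 : ℝ) := by
  refine ⟨{i | ∃ t, chk i t = true}, ⟨fun i => Nat.rfind fun t => Part.some (chk i t),
    Partrec.rfind chk_primrec.to_comp.partrec₂, fun i => ?_⟩, fun n hn => ?_⟩
  · refine Iff.trans ?_ Nat.rfind_dom'.symm
    exact ⟨fun ⟨t, ht⟩ => ⟨t, Part.mem_some_iff.2 ht.symm, fun _ => trivial⟩,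
      fun ⟨t, ht, _⟩ => ⟨t, (Part.mem_some_iff.1 ht).symm⟩⟩
  set A : Set ℕ := {i | ∃ t, chk i t = true} with hA
  set x := prefEncode (chi A) n with hxdef
  have hex : ∃ p, x ∈ _root_.univ p 0 :=
    ⟨Encodable.encode (Code.const x), by
      rw [_root_.univ, Denumerable.ofNat_encode, Code.eval_const]; exact Part.mem_some x⟩
  obtain ⟨q, hq, hqx⟩ : KC x 0 ∈ {L | ∃ p, strLen p = L ∧ x ∈ _root_.univ p 0} :=
    Nat.sInf_mem (hex.elim fun p hp => ⟨_, p, rfl, hp⟩)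
  classical
  -- the least program for `x`; it also has least length
  set p := Nat.find hex with hpdef
  have hpx : x ∈ _root_.univ p 0 := Nat.find_spec hex
  have hadm : adm p = true := adm_of_univ_minimal hpx fun q hq => Nat.find_min' hex hq
  have hlen : strLen p ≤ KC x 0 := by
    rw [← hq, strLen, strLen, Nat.log2_eq_log_two, Nat.log2_eq_log_two]
    exact Nat.log_mono_right (Nat.succ_le_succ (Nat.find_min' hex hqx))
  have hle : n ≤ 2 ^ strLen p := by
    by_contra! h
    have hj := rk_lt h
    have h1 : rk p + 1 ∈ A ↔ chi A (rk p) = false :=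
      (exists_chk_iff hadm hpx).trans (bitZero_prefEncode (chi A) hj)
    by_cases hm : rk p + 1 ∈ A
    · have := h1.1 hm
      simp [chi, hm] at this
    · exact hm (h1.2 (by simp [chi, hm]))
  rw [Real.logb_le_iff_le_rpow (by norm_num) (by exact_mod_cast hn), Real.rpow_natCast]
  exact_mod_cast hle.trans (Nat.pow_le_pow_right (by norm_num) hlen)
end

section
/- There exist an infinite binary sequence ζ and a constant c such that C(ζ_{1:n}|n) ≤ log n + c for every n ≥ 1, yet ζ is not the characteristic sequence of any recursively enumerable subset of ℕ. (Thus the converse of Barzdins's compressibility bound for characteristic sequences of r.e. sets fails.) -/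
/-!
Place the bits of a non-r.e. set `B` at the positions `a 0 < a 1 < ⋯` of a primitive recursive,
very sparse sequence (`sparsePos`), and put zeros everywhere else (`sparseSeq B`). Since `a` is
computable, `B` many-one reduces to the set of ones, so `sparseSeq B` is not the characteristic sequence
of an r.e. set. A prefix of length `n` is determined by `n` and the few bits of `B` at the indices `k` with `a k < n`, packed into one number `m`.

The numbering of `Nat.Partrec.Code` is a wasteful one: hard-wiring the datum `m` into a code `c` by
`curry c m` gives a code whose number is far larger than `m`, so the usual
additive-constant coding arguments are not available. The sparse sequence compensates for
this: `a k` is chosen to exceed the number of `curry c m` for all `m < 2 ^ (k + 1)` and all codes `c`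
numbered at most `k`. Letting `c` range over all codes up to `k` avoids the circularity that arises
because the decoder has to compute `a` itself; the finitely many `k` below the number of
the decoder are absorbed by the additive constant.
-/

open Filter Set

/-- The number of the code obtained by hard-wiring the first input `m` into the code numbered `e`. -/
def curryNum (e m : ℕ) : ℕ :=
  Encodable.encode (Nat.Partrec.Code.curry (Denumerable.ofNat Nat.Partrec.Code e) m)

theorem primrec_curryNum : Primrec₂ curryNum :=
  Primrec.encode.comp (Nat.Partrec.Code.primrec₂_curry.comp
    ((Primrec.ofNat Nat.Partrec.Code).comp Primrec.fst) Primrec.snd)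

/-- A strictly increasing primitive recursive function such that
`curryNum e m < curryNumSum j` as soon as `Nat.pair e m < j`. -/
def curryNumSum (j : ℕ) : ℕ :=
  Nat.rec 0 (fun i s => s + curryNum i.unpair.1 i.unpair.2 + 1) j

theorem primrec_curryNumSum : Primrec curryNumSum := by
  refine Primrec.nat_rec₁ 0 ?_
  have h : Primrec fun q : ℕ × ℕ => curryNum q.1.unpair.1 q.1.unpair.2 :=
    primrec_curryNum.comp (Primrec.fst.comp (Primrec.unpair.comp Primrec.fst))
      (Primrec.snd.comp (Primrec.unpair.comp Primrec.fst))
  exact Primrec.succ.comp (Primrec.nat_add.comp Primrec.snd h)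

theorem curryNumSum_succ (j : ℕ) :
    curryNumSum (j + 1) = curryNumSum j + curryNum j.unpair.1 j.unpair.2 + 1 := rfl

theorem strictMono_curryNumSum : StrictMono curryNumSum :=
  strictMono_nat_of_lt_succ fun j => by rw [curryNumSum_succ]; omega

/-- The sparse sequence of positions carrying information. -/
def sparsePos (k : ℕ) : ℕ := curryNumSum (Nat.pair k (2 ^ (k + 1)) + 1)

theorem primrec_sparsePos : Primrec sparsePos := by
  have hpow : Primrec₂ ((· ^ ·) : ℕ → ℕ → ℕ) := Primrec₂.unpaired'.1 Nat.Primrec.pow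
  exact primrec_curryNumSum.comp (Primrec.succ.comp
    (Primrec₂.natPair.comp Primrec.id (hpow.comp (Primrec.const 2) Primrec.succ)))

theorem pair_le_pair_of_le {a b c d : ℕ} (h₁ : a ≤ c) (h₂ : b ≤ d) :
    Nat.pair a b ≤ Nat.pair c d := by
  have hl : Nat.pair a b ≤ Nat.pair c b := by
    rcases h₁.eq_or_lt with rfl | h
    exacts [le_rfl, (Nat.pair_lt_pair_left b h).le]
  have hr : Nat.pair c b ≤ Nat.pair c d := by
    rcases h₂.eq_or_lt with rfl | h
    exacts [le_rfl, (Nat.pair_lt_pair_right c h).le]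
  exact hl.trans hr

theorem strictMono_sparsePos : StrictMono sparsePos := by
  intro k l h
  refine strictMono_curryNumSum (Nat.succ_lt_succ ?_)
  exact (Nat.pair_lt_pair_left _ h).trans_le
    (pair_le_pair_of_le le_rfl (Nat.pow_le_pow_right two_pos (by omega)))

theorem curryNum_lt_sparsePos {e m k : ℕ} (he : e ≤ k) (hm : m < 2 ^ (k + 1)) :
    curryNum e m < sparsePos k := by
  have h : curryNum e m < curryNumSum (Nat.pair e m + 1) := by
    rw [curryNumSum_succ, Nat.unpair_pair]
    simp only
    omega
  exact h.trans_le (strictMono_curryNumSum.monotone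
    (Nat.succ_le_succ (pair_le_pair_of_le he hm.le)))

open Classical in
/-- The sequence whose ones are exactly at the positions `sparsePos k` with `k ∈ B`. The bound
`k < i + 1` loses nothing, since `k ≤ sparsePos k`, and makes the search finite. -/
noncomputable def sparseSeq (B : Set ℕ) : ℕ → Bool :=
  fun i => decide (∃ k < i + 1, k ∈ B ∧ sparsePos k = i)

theorem sparseSeq_sparsePos (B : Set ℕ) (k : ℕ) : sparseSeq B (sparsePos k) = true ↔ k ∈ B := by
  simp only [sparseSeq, decide_eq_true_eq]
  constructor
  · rintro ⟨l, -, hl, h⟩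
    rwa [← strictMono_sparsePos.injective h]
  · exact fun h => ⟨k, Nat.lt_succ_of_le strictMono_sparsePos.le_apply, h, rfl⟩

/-- The number `m` viewed as the finite set of the indices of its binary ones. -/
def bitSet (m : ℕ) : Set ℕ := {k | m.testBit k = true}

theorem primrec_sparseSeq_bitSet : Primrec₂ fun m i => sparseSeq (bitSet m) i := by
  classical
  have hpow : Primrec₂ ((· ^ ·) : ℕ → ℕ → ℕ) := Primrec₂.unpaired'.1 Nat.Primrec.pow
  have hbit : PrimrecRel fun (k : ℕ) (q : ℕ × ℕ) => k ∈ bitSet q.1 := by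
    have : PrimrecPred fun r : ℕ × ℕ × ℕ => r.2.1 / 2 ^ r.1 % 2 = 1 :=
      Primrec.eq.comp (Primrec.nat_mod.comp (Primrec.nat_div.comp
        (Primrec.fst.comp Primrec.snd) (hpow.comp (Primrec.const 2) Primrec.fst))
        (Primrec.const 2)) (Primrec.const 1)
    exact this.of_eq fun r => by simp [bitSet, Nat.testBit_eq_decide_div_mod_eq]
  have hpos : PrimrecRel fun (k : ℕ) (q : ℕ × ℕ) => sparsePos k = q.2 :=
    Primrec.eq.comp (primrec_sparsePos.comp Primrec.fst) (Primrec.snd.comp Primrec.snd)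
  have hR : PrimrecRel fun (k : ℕ) (q : ℕ × ℕ) => k ∈ bitSet q.1 ∧ sparsePos k = q.2 :=
    PrimrecPred.and hbit hpos
  have hlist : PrimrecRel fun (L : List ℕ) (q : ℕ × ℕ) =>
      ∃ k ∈ L, k ∈ bitSet q.1 ∧ sparsePos k = q.2 := hR.exists_mem_list
  have hex : PrimrecPred fun q : ℕ × ℕ =>
      ∃ k < q.2 + 1, k ∈ bitSet q.1 ∧ sparsePos k = q.2 :=
    (hlist.comp (Primrec.list_range.comp (Primrec.succ.comp Primrec.snd)) Primrec.id).of_eq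
      fun q => by simp only [List.mem_range, Nat.succ_eq_add_one, id]
  exact hex.decide

/-- The decoder: `m` and `n` determine the prefix of length `n` of the sparse sequence with data
`m`. -/
theorem primrec_decoder : Primrec₂ fun m n => prefEncode (sparseSeq (bitSet m)) n := by
  have hif : Primrec fun r : ℕ × ℕ × ℕ =>
      (if sparseSeq (bitSet r.1) r.2.1 = true then 1 else 0 : ℕ) :=
    Primrec.ite (Primrec.eq.comp (primrec_sparseSeq_bitSet.comp Primrec.fst
      (Primrec.fst.comp Primrec.snd)) (Primrec.const true)) (Primrec.const 1) (Primrec.const 0)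
  have hstep : Primrec₂ fun (m : ℕ) (q : ℕ × ℕ) =>
      2 * q.2 + (if sparseSeq (bitSet m) q.1 = true then 1 else 0) + 1 :=
    Primrec.succ.comp (Primrec.nat_add.comp (Primrec.nat_mul.comp (Primrec.const 2)
      (Primrec.snd.comp Primrec.snd)) hif)
  refine (Primrec.nat_rec (Primrec.const 0) hstep).of_eq fun m n => ?_
  induction n with
  | zero => rfl
  | succ n ih => simp only [prefEncode, ih]

theorem exists_decoder : ∃ e : ℕ, ∀ m n,
    KC (prefEncode (sparseSeq (bitSet m)) n) n ≤ strLen (curryNum e m) := by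
  have hF : Nat.Partrec (fun x : ℕ =>
      (Part.some (prefEncode (sparseSeq (bitSet x.unpair.1)) x.unpair.2) : Part ℕ)) := by
    have h : Primrec fun x : ℕ => prefEncode (sparseSeq (bitSet x.unpair.1)) x.unpair.2 :=
      primrec_decoder.comp (Primrec.fst.comp Primrec.unpair) (Primrec.snd.comp Primrec.unpair)
    exact Partrec.nat_iff.1 h.to_comp
  obtain ⟨c, hc⟩ := Nat.Partrec.Code.exists_code.1 hF
  refine ⟨Encodable.encode c, fun m n => Nat.sInf_le ⟨_, rfl, ?_⟩⟩
  simp [_root_.univ, curryNum, hc]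

theorem prefEncode_congr {ω η : ℕ → Bool} {n : ℕ} (h : ∀ i < n, ω i = η i) :
    prefEncode ω n = prefEncode η n := by
  induction n with
  | zero => rfl
  | succ n ih =>
    simp only [prefEncode, ih fun i hi => h i (hi.trans n.lt_succ_self), h n n.lt_succ_self]

/-- Below position `sparsePos K`, the first `K` bits of `B` suffice. -/
theorem exists_data (B : Set ℕ) (K : ℕ) : ∃ m < 2 ^ K, ∀ n ≤ sparsePos K,
    prefEncode (sparseSeq B) n = prefEncode (sparseSeq (bitSet m)) n := by
  classical
  refine ⟨Nat.ofBits fun k : Fin K => decide ((k : ℕ) ∈ B), Nat.ofBits_lt_two_pow _,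
    fun n hn => prefEncode_congr fun i hi => ?_⟩
  simp only [sparseSeq, decide_eq_decide]
  refine exists_congr fun k => and_congr_right fun _ => and_congr_left fun hk => ?_
  have hkK : k < K := strictMono_sparsePos.lt_iff_lt.1 (by omega)
  simp [bitSet, Nat.testBit_ofBits_lt, hkK]

theorem exists_KC_bound (B : Set ℕ) : ∃ c : ℕ, ∀ n : ℕ, 1 ≤ n →
    (KC (prefEncode (sparseSeq B) n) n : ℝ) ≤ Real.logb 2 n + c := by
  obtain ⟨e, he⟩ := exists_decoder
  -- The constant covers every datum that is used before the sparse sequence has overtaken the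
  -- number `e` of the decoder.
  refine ⟨∑ m ∈ Finset.range (2 ^ e), strLen (curryNum e m), fun n hn => ?_⟩
  have hlog : (0 : ℝ) ≤ Real.logb 2 n :=
    Real.logb_nonneg one_lt_two (by exact_mod_cast hn)
  by_cases hne : n ≤ sparsePos e
  · obtain ⟨m, hm, h⟩ := exists_data B e
    have h₁ : KC (prefEncode (sparseSeq B) n) n ≤
        ∑ m ∈ Finset.range (2 ^ e), strLen (curryNum e m) := by
      rw [h n hne]
      exact (he m n).trans (Finset.single_le_sum (f := fun m => strLen (curryNum e m))
        (fun _ _ => Nat.zero_le _) (Finset.mem_range.2 hm))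
    have h₂ : (KC (prefEncode (sparseSeq B) n) n : ℝ) ≤
        (∑ m ∈ Finset.range (2 ^ e), strLen (curryNum e m) : ℕ) := Nat.cast_le.2 h₁
    linarith
  · have hex : ∃ K, n ≤ sparsePos K := ⟨n, strictMono_sparsePos.le_apply⟩
    -- `k + 1` is the least index whose position is not inside the prefix.
    obtain ⟨k, hk, hk₁, hk₂⟩ : ∃ k, e ≤ k ∧ sparsePos k < n ∧ n ≤ sparsePos (k + 1) := by
      have hlt : e < Nat.find hex := by
        by_contra hcon
        exact hne ((Nat.find_spec hex).trans (strictMono_sparsePos.monotone (not_lt.1 hcon)))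
      refine ⟨Nat.find hex - 1, by omega, not_le.1 (Nat.find_min hex (by omega)), ?_⟩
      rw [Nat.sub_add_cancel (by omega)]
      exact Nat.find_spec hex
    obtain ⟨m, hm, h⟩ := exists_data B (k + 1)
    have h₁ : KC (prefEncode (sparseSeq B) n) n ≤ Nat.log 2 n := by
      rw [h n hk₂]
      refine (he m n).trans ?_
      rw [strLen, Nat.log2_eq_log_two]
      exact Nat.log_mono_right ((curryNum_lt_sparsePos hk hm).trans hk₁)
    have h₂ : (KC (prefEncode (sparseSeq B) n) n : ℝ) ≤ Nat.log 2 n := Nat.cast_le.2 h₁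
    have h₃ : (Nat.log 2 n : ℝ) ≤ Real.logb 2 n := by
      exact_mod_cast Real.natLog_le_logb n 2
    have h₄ : (0 : ℝ) ≤ (∑ m ∈ Finset.range (2 ^ e), strLen (curryNum e m) : ℕ) :=
      Nat.cast_nonneg _
    linarith

/-- The complement of the diagonal halting set. -/
def coHalting : Set ℕ := {k | ¬ (_root_.univ k k).Dom}

theorem not_isRE_coHalting : ¬ isRE coHalting := by
  rintro ⟨f, hf, h⟩
  obtain ⟨c, rfl⟩ := Nat.Partrec.Code.exists_code.1 (Partrec.nat_iff.1 hf)
  have := h (Encodable.encode c)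
  simp [coHalting, _root_.univ] at this

/-- There is an infinite binary sequence `ζ` with `C(ζ_{1:n}|n) ≤ log n + c` for every
`n ≥ 1` that is not the characteristic sequence of any r.e. subset of `ℕ`. -/
theorem stmt12 :
    ∃ (ζ : ℕ → Bool) (c : ℕ),
      (∀ n : ℕ, 1 ≤ n → (KC (prefEncode ζ n) n : ℝ) ≤ Real.logb 2 n + c) ∧
      ¬ ∃ A : Set ℕ, isRE A ∧ ∀ i : ℕ, ζ i = true ↔ (i + 1) ∈ A := by
  obtain ⟨c, hc⟩ := exists_KC_bound coHalting
  refine ⟨sparseSeq coHalting, c, hc, ?_⟩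
  rintro ⟨A, ⟨f, hf, hA⟩, h⟩
  refine not_isRE_coHalting ⟨fun k => f (sparsePos k + 1),
    hf.comp (Primrec.succ.comp primrec_sparsePos).to_comp, fun k => ?_⟩
  rw [← sparseSeq_sparsePos, h, hA]
end
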